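/- arXiv:1107.1419 — 2 statements merged into one kernel-verified Lean document; each statement's English description precedes it below -/
import Mathlib

section
/- Any connected compact subset C of the plane can be approximated arbitrarily well in Hausdorff distance by the closure of a smooth bounded simply connected domain; more precisely, for every ε > 0 there exists a bounded simply connected open set O with smooth (C^∞ Jordan curve) boundary such that the Hausdorff distance between C and the closure of O is less than ε. -/
open Metric Filter

/-!
Diffeomorphisms of the ambient space supported in a connected open set `U` act transitively on `U`:
a small bump perturbation of the identity moves a point to any nearby point, and orbits, being open,
exhaust `U`. In dimension at least two, `U` stays connected after removing finitely many points, so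
points can be moved one at a time without disturbing the previous ones, and the action is
`n`-transitive for every `n`.

Take for `U` the `δ`-neighbourhood of `C` and start with a small round disc in `U`. Some
diffeomorphism supported in `U` makes the disc contain a finite `δ`-net of `C`, while keeping it
inside `U`. The deformed disc is within Hausdorff distance `δ` of `C`.
-/

section Approximation

open Set Function
open scoped Manifold ContDiff Topology Pointwise

section Connectedness

theorem isPreconnected_sdiff_singleton_of_mem_nhds {X : Type*} [TopologicalSpace X] [T1Space X]
    {U N : Set X} {a : X} (hU : IsPreconnected U) (hN : N ∈ 𝓝 a) (hNU : N ⊆ U)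
    (hNa : IsPreconnected (N \ {a})) : IsPreconnected (U \ {a}) := by
  classical
  refine isPreconnected_of_forall_constant fun f hf x hx y hy ↦ ?_
  obtain ⟨c, hc⟩ : ∃ c, ∀ z ∈ N \ {a}, f z = c := by
    rcases (N \ {a}).eq_empty_or_nonempty with hempty | ⟨w, hw⟩
    · exact ⟨true, by simp [hempty]⟩
    · exact ⟨f w, fun z hz ↦
        hNa.constant (hf.mono (sdiff_subset_sdiff_left hNU)) hz hw⟩
  have hf_near : f =ᶠ[𝓝[U \ {a}] a] fun _ ↦ c := by
    filter_upwards [self_mem_nhdsWithin, mem_nhdsWithin_of_mem_nhds hN] with z hzU hzN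
    exact hc z ⟨hzN, hzU.2⟩
  have hupdate : ContinuousOn (update f a c) U :=
    continuousOn_update_iff.2 ⟨hf, fun _ ↦ tendsto_const_nhds.congr' hf_near.symm⟩
  have hxy := hU.constant hupdate hx.1 hy.1
  rwa [update_of_ne hx.2, update_of_ne hy.2] at hxy

variable {E : Type*} [NormedAddCommGroup E] [NormedSpace ℝ E]

theorem isPreconnected_thickening {C : Set E} (hC : IsPreconnected C) (δ : ℝ) :
    IsPreconnected (thickening δ C) := by
  rw [← add_ball_zero, ← add_image_prod]
  exact (hC.prod isPreconnected_ball).image _ (by fun_prop)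

theorem isPreconnected_ball_sdiff_center (hE : 1 < Module.rank ℝ E) (x : E) {r : ℝ}
    (hr : 0 < r) : IsPreconnected (ball x r \ {x}) := by
  let e := OpenPartialHomeomorph.univBall (E := E) x r
  have he : e '' {0}ᶜ = ball x r \ {x} := by
    have hinj : Injective e := injOn_univ.1 <| by simpa [e] using e.injOn
    have hrange : range e = ball x r := by
      rw [← image_univ, ← OpenPartialHomeomorph.univBall_target x hr,
        ← OpenPartialHomeomorph.univBall_source x r, e.image_source_eq_target]
    rw [compl_eq_univ_sdiff, image_sdiff hinj, image_univ, hrange, image_singleton,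
      OpenPartialHomeomorph.univBall_apply_zero]
  rw [← he]
  exact (isConnected_compl_singleton_of_one_lt_rank hE 0).isPreconnected.image _
    (OpenPartialHomeomorph.continuous_univBall x r).continuousOn

theorem isPreconnected_sdiff_singleton (hE : 1 < Module.rank ℝ E) {U : Set E} (hU : IsOpen U)
    (hUc : IsPreconnected U) (a : E) : IsPreconnected (U \ {a}) := by
  by_cases ha : a ∈ U
  · obtain ⟨r, hr, hrU⟩ := isOpen_iff.1 hU a ha
    exact isPreconnected_sdiff_singleton_of_mem_nhds hUc (ball_mem_nhds a hr) hrU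
      (isPreconnected_ball_sdiff_center hE a hr)
  · rwa [sdiff_singleton_eq_self ha]

theorem isPreconnected_sdiff_of_finite (hE : 1 < Module.rank ℝ E) {U F : Set E} (hU : IsOpen U)
    (hUc : IsPreconnected U) (hF : F.Finite) : IsPreconnected (U \ F) := by
  induction F, hF using Set.Finite.induction_on with
  | empty => rwa [sdiff_empty]
  | @insert a F _ hF ih =>
    rw [← union_singleton, ← sdiff_sdiff]
    exact isPreconnected_sdiff_singleton hE (hU.sdiff hF.isClosed) ih a

end Connectedness

section IdentityPerturbation

variable {𝕜 E : Type*} [NontriviallyNormedField 𝕜] [NormedAddCommGroup E] [NormedSpace 𝕜 E]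
  [CompleteSpace E]

theorem exists_continuousLinearEquiv_eq_id_add {A : E →L[𝕜] E} (hA : ‖A‖ < 1) :
    ∃ e : E ≃L[𝕜] E, (e : E →L[𝕜] E) = ContinuousLinearMap.id 𝕜 E + A :=
  ⟨.ofUnit (Units.oneSub (-A) (by rwa [norm_neg])), by
    ext x
    exact congrArg (· x) (sub_neg_eq_add 1 A)⟩

theorem exists_diffeomorph_eq_id_add {n : ℕ∞ω} {g : E → E} (hn : n ≠ 0) (hg : ContDiff 𝕜 n g)
    {K : NNReal} (hgK : LipschitzWith K g) (hK : K < 1) :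
    ∃ Ψ : E ≃ₘ^n⟮𝓘(𝕜, E), 𝓘(𝕜, E)⟯ E, ∀ x, Ψ x = x + g x := by
  have happrox : ApproximatesLinearOn (fun x ↦ x + g x)
      (ContinuousLinearEquiv.refl 𝕜 E : E →L[𝕜] E) univ K := by
    intro x _ y _
    simpa [add_sub_add_comm] using hgK.norm_sub_le x y
  have hone [Nontrivial E] : ‖ContinuousLinearMap.id 𝕜 E‖₊ = 1 :=
    NNReal.eq ContinuousLinearMap.norm_id
  let Ψ : E ≃ₜ E := happrox.toHomeomorph _ <|
    (subsingleton_or_nontrivial E).imp_right fun (_ : Nontrivial E) ↦ by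
      simpa [hone] using hK
  have hnorm (x : E) : ‖fderiv 𝕜 g x‖ < 1 :=
    (norm_fderiv_le_of_lipschitz 𝕜 hgK).trans_lt (mod_cast hK)
  choose Ψ' hΨ' using fun x ↦ exists_continuousLinearEquiv_eq_id_add (hnorm x)
  have hsmooth : ContDiff 𝕜 n Ψ := contDiff_id.add hg
  have hderiv (x : E) : HasFDerivAt Ψ (Ψ' x : E →L[𝕜] E) x := by
    rw [hΨ']
    exact (hasFDerivAt_id x).add (hg.differentiable hn x).hasFDerivAt
  exact ⟨⟨Ψ.toEquiv, hsmooth.contMDiff, (Ψ.contDiff_symm hderiv hsmooth).contMDiff⟩, fun _ ↦ rfl⟩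

end IdentityPerturbation

section SupportedDiffeomorphisms

theorem mapsTo_of_eqOn_id_compl {α : Type*} {f : α → α} {V : Set α} (hf : Injective f)
    (hfV : EqOn f id Vᶜ) : MapsTo f V V := by
  intro x hx
  by_contra hfx
  have hfixed : f x = x := hf (hfV hfx)
  exact hfx (hfixed.symm ▸ hx)

variable {E : Type*} [NormedAddCommGroup E] [NormedSpace ℝ E]

/-- `DiffeoJoined V x y` means that some smooth diffeomorphism of `E` which is the identity outside
`V` sends `x` to `y`: the orbit relation of the group of diffeomorphisms supported in `V`. The
support is not required to be compact. -/
def DiffeoJoined (V : Set E) (x y : E) : Prop :=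
  ∃ Ψ : E ≃ₘ[ℝ] E, EqOn Ψ id Vᶜ ∧ Ψ x = y

namespace DiffeoJoined

variable {V : Set E} {x y z : E}

theorem symm (h : DiffeoJoined V x y) : DiffeoJoined V y x := by
  obtain ⟨Ψ, hΨ, rfl⟩ := h
  refine ⟨Ψ.symm, fun w hw ↦ ?_, Ψ.symm_apply_apply x⟩
  exact Ψ.injective ((Ψ.apply_symm_apply w).trans (hΨ hw).symm)

theorem trans (hxy : DiffeoJoined V x y) (hyz : DiffeoJoined V y z) : DiffeoJoined V x z := by
  obtain ⟨Ψ, hΨ, rfl⟩ := hxy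
  obtain ⟨Θ, hΘ, rfl⟩ := hyz
  exact ⟨Ψ.trans Θ, fun w hw ↦ (congrArg Θ (hΨ hw)).trans (hΘ hw), rfl⟩

end DiffeoJoined

variable [FiniteDimensional ℝ E]

theorem eventually_diffeoJoined {V : Set E} {x : E} (hV : V ∈ 𝓝 x) :
    ∀ᶠ y in 𝓝 x, DiffeoJoined V x y := by
  have : CompleteSpace E := FiniteDimensional.complete ℝ E
  obtain ⟨r, hr, hrV⟩ := Metric.mem_nhds_iff.1 hV
  let φ : ContDiffBump x := ⟨r / 2, r, by linarith, by linarith⟩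
  have hφV : ∀ z ∉ V, φ z = 0 := fun z hz ↦
    notMem_support.1 fun h ↦ hz (hrV (φ.support_eq ▸ h))
  obtain ⟨K, hφK⟩ := (φ.contDiff (n := 1)).lipschitzWith_of_hasCompactSupport (𝕂 := ℝ)
    φ.hasCompactSupport one_ne_zero
  have hsmall : ∀ᶠ y in 𝓝 x, ‖ContinuousLinearMap.toSpanSingleton ℝ (y - x)‖₊ * K < 1 := by
    simp only [ContinuousLinearMap.nnnorm_toSpanSingleton]
    have hcont : Continuous fun y ↦ ‖y - x‖₊ * K := by fun_prop
    exact hcont.continuousAt.eventually_lt continuousAt_const (by simp)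
  filter_upwards [hsmall] with y hy
  obtain ⟨Ψ, hΨ⟩ := exists_diffeomorph_eq_id_add (n := ∞) (by simp)
    (φ.contDiff.smul contDiff_const)
    ((ContinuousLinearMap.toSpanSingleton ℝ (y - x)).lipschitz.comp hφK) hy
  refine ⟨Ψ, fun z hz ↦ ?_, ?_⟩
  · simp [hΨ, hφV z hz]
  · simp [hΨ, φ.eventuallyEq_one.eq_of_nhds]

theorem diffeoJoined_of_isPreconnected {V : Set E} (hV : IsOpen V) (hVc : IsPreconnected V)
    {x y : E} (hx : x ∈ V) (hy : y ∈ V) : DiffeoJoined V x y :=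
  hVc.induction₂ (DiffeoJoined V)
    (fun _ hz ↦ mem_nhdsWithin_of_mem_nhds (eventually_diffeoJoined (hV.mem_nhds hz)))
    (fun _ _ _ _ _ _ ↦ .trans) (fun _ _ _ _ ↦ .symm) hx hy

theorem exists_diffeomorph_subset_image (hE : 1 < Module.rank ℝ E) {U D F : Set E}
    (hU : IsOpen U) (hUc : IsPreconnected U) (hDU : D ⊆ U) (hD : D.Infinite) (hF : F.Finite)
    (hFU : F ⊆ U) : ∃ Ψ : E ≃ₘ[ℝ] E, EqOn Ψ id Uᶜ ∧ F ⊆ Ψ '' D := by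
  induction F, hF using Set.Finite.induction_on with
  | empty => exact ⟨Diffeomorph.refl _ _ _, eqOn_refl _ _, empty_subset _⟩
  | @insert a F ha hF ih =>
    obtain ⟨haU, hFU⟩ := insert_subset_iff.1 hFU
    obtain ⟨Ψ, hΨU, hFΨ⟩ := ih hFU
    obtain ⟨_, ⟨d, hd, rfl⟩, hdF⟩ := (hD.image Ψ.injective.injOn).exists_notMem_finite hF
    have hdU : Ψ d ∈ U := mapsTo_of_eqOn_id_compl Ψ.injective hΨU (hDU hd)
    obtain ⟨Θ, hΘ, rfl⟩ := diffeoJoined_of_isPreconnected (hU.sdiff hF.isClosed)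
      (isPreconnected_sdiff_of_finite hE hU hUc hF) ⟨hdU, hdF⟩ ⟨haU, ha⟩
    refine ⟨Ψ.trans Θ, fun x hx ↦ ?_, insert_subset ⟨d, hd, rfl⟩ fun x hx ↦ ?_⟩
    · exact (congrArg Θ (hΨU hx)).trans (hΘ fun h ↦ hx h.1)
    · obtain ⟨w, hw, rfl⟩ := hFΨ hx
      exact ⟨w, hw, hΘ fun h ↦ h.2 hx⟩

theorem exists_diffeomorph_hausdorffDist_image_le (hE : 1 < Module.rank ℝ E) {C D : Set E}
    (hCb : Bornology.IsBounded C) (hC : IsPreconnected C) {δ : ℝ} (hδ : 0 < δ)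
    (hD : D.Infinite) (hDC : D ⊆ thickening δ C) :
    ∃ Ψ : E ≃ₘ[ℝ] E, hausdorffDist C (Ψ '' D) ≤ δ := by
  have : ProperSpace E := FiniteDimensional.proper ℝ E
  obtain ⟨F, hFC, hF, hCF⟩ :=
    exists_finite_cover_balls_of_isCompact_closure hCb.isCompact_closure hδ
  obtain ⟨Ψ, hΨ, hFΨ⟩ := exists_diffeomorph_subset_image hE isOpen_thickening
    (isPreconnected_thickening hC δ) hDC hD hF (hFC.trans (self_subset_thickening hδ C))
  refine ⟨Ψ, hausdorffDist_le_of_mem_dist hδ.le (fun x hx ↦ ?_) ?_⟩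
  · obtain ⟨y, hy, hxy⟩ := mem_iUnion₂.1 (hCF hx)
    exact ⟨y, hFΨ hy, hxy.le⟩
  · rintro _ ⟨z, hz, rfl⟩
    obtain ⟨y, hy, hzy⟩ :=
      mem_thickening_iff.1 (mapsTo_of_eqOn_id_compl Ψ.injective hΨ (hDC hz))
    exact ⟨y, hy, hzy.le⟩

end SupportedDiffeomorphisms

section JordanCurves

theorem simplyConnectedSpace_image_ball {E X : Type*} [NormedAddCommGroup E] [NormedSpace ℝ E]
    [TopologicalSpace X] (Φ : E ≃ₜ X) (c : E) {r : ℝ} (hr : 0 < r) :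
    SimplyConnectedSpace (Φ '' ball c r) := by
  have : ContractibleSpace (ball c r) := contractibleSpace_ball hr
  have : ContractibleSpace (Φ '' ball c r) := (Φ.image (ball c r)).symm.contractibleSpace
  infer_instance

variable {E F : Type*} [NormedAddCommGroup E] [NormedSpace ℝ E] [NormedAddCommGroup F]
  [NormedSpace ℝ F]

/-- `γ` is a smooth regular parametrization of a Jordan curve. It is encoded as a `1`-periodic
function on `ℝ`, so that smoothness covers the closing point,
and is injective on one half-open period. -/
structure IsSmoothJordanParam (γ : ℝ → E) : Prop where
  contDiff : ContDiff ℝ ∞ γ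
  periodic : Periodic γ 1
  injOn : InjOn γ (Ico 0 1)
  deriv_ne_zero : ∀ t, deriv γ t ≠ 0

theorem isSmoothJordanParam_circleMap (c : ℂ) {r : ℝ} (hr : r ≠ 0) :
    IsSmoothJordanParam fun t ↦ circleMap c r (2 * Real.pi * t) where
  contDiff := (contDiff_circleMap c r).comp (contDiff_const.mul contDiff_id)
  periodic t := by simp only [mul_add, mul_one, periodic_circleMap c r (2 * Real.pi * t)]
  injOn := by
    refine (injOn_circleMap_of_abs_sub_le' (a := 0) (b := 2 * Real.pi) hr (by simp)).comp
      (mul_right_injective₀ Real.two_pi_pos.ne').injOn fun t ht ↦ ?_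
    exact ⟨mul_nonneg Real.two_pi_pos.le ht.1, mul_lt_of_lt_one_right Real.two_pi_pos ht.2⟩
  deriv_ne_zero t := by
    rw [deriv_comp_mul_left (2 * Real.pi) (circleMap c r)]
    exact smul_ne_zero Real.two_pi_pos.ne' (deriv_circleMap_ne_zero hr)

theorem IsSmoothJordanParam.diffeomorph_comp {γ : ℝ → E} (hγ : IsSmoothJordanParam γ)
    (Φ : E ≃ₘ[ℝ] F) : IsSmoothJordanParam (Φ ∘ γ) where
  contDiff := Φ.contDiff.comp hγ.contDiff
  periodic := hγ.periodic.comp Φ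
  injOn := Φ.injective.comp_injOn hγ.injOn
  deriv_ne_zero t := by
    have hΦ : DifferentiableAt ℝ Φ (γ t) := Φ.contDiff.differentiable (by simp) _
    have hΦ' : Injective (fderiv ℝ Φ (γ t)) := by
      rw [← mfderiv_eq_fderiv, ← Φ.mfderivToContinuousLinearEquiv_coe (by simp)]
      exact (Φ.mfderivToContinuousLinearEquiv (by simp) (γ t)).injective
    rw [fderiv_comp_deriv t hΦ (hγ.contDiff.differentiable (by simp) t)]
    exact (map_ne_zero_iff _ hΦ').2 (hγ.deriv_ne_zero t)

theorem exists_isSmoothJordanParam_frontier_image_ball (Φ : ℂ ≃ₘ[ℝ] E) (c : ℂ) {r : ℝ}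
    (hr : 0 < r) : ∃ γ, IsSmoothJordanParam γ ∧ frontier (Φ '' ball c r) = range γ := by
  refine ⟨_, (isSmoothJordanParam_circleMap c hr.ne').diffeomorph_comp Φ, ?_⟩
  have hrange : range (fun t ↦ circleMap c r (2 * Real.pi * t)) = sphere c r := by
    have hsurj : Surjective fun t : ℝ ↦ 2 * Real.pi * t :=
      mul_left_surjective₀ Real.two_pi_pos.ne'
    exact (hsurj.range_comp (circleMap c r)).trans (by rw [range_circleMap, abs_of_pos hr])
  rw [range_comp, hrange, ← frontier_ball c hr.ne', ← Φ.coe_toHomeomorph,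
    Φ.toHomeomorph.image_frontier]

end JordanCurves

theorem exists_diffeomorph_complex_hausdorffDist_image_lt {E : Type*} [NormedAddCommGroup E]
    [NormedSpace ℝ E] (hE : Module.finrank ℝ E = 2) {C : Set E} (hCb : Bornology.IsBounded C)
    (hC : IsConnected C) {ε : ℝ} (hε : 0 < ε) :
    ∃ (Φ : ℂ ≃ₘ[ℝ] E) (c : ℂ) (r : ℝ), 0 < r ∧ hausdorffDist C (Φ '' closedBall c r) < ε := by
  have : FiniteDimensional ℝ E := Module.finite_of_finrank_eq_succ hE
  have hrank : 1 < Module.rank ℝ E := Module.one_lt_rank_of_one_lt_finrank (by omega)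
  let L : ℂ ≃L[ℝ] E := .ofFinrankEq (Complex.finrank_real_complex.trans hE.symm)
  obtain ⟨x, hx⟩ := hC.nonempty
  have hnhds : L ⁻¹' thickening (ε / 2) C ∈ 𝓝 (L.symm x) := by
    refine (isOpen_thickening.preimage L.continuous).mem_nhds ?_
    simpa using self_subset_thickening (half_pos hε) C hx
  obtain ⟨r, hr, hrC⟩ := nhds_basis_closedBall.mem_iff.1 hnhds
  have hinf : (L '' closedBall (L.symm x) r).Infinite :=
    (infinite_of_mem_nhds _ (closedBall_mem_nhds _ hr)).image L.injective.injOn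
  obtain ⟨Ψ, hΨ⟩ := exists_diffeomorph_hausdorffDist_image_le hrank hCb hC.isPreconnected
    (half_pos hε) hinf (image_subset_iff.2 hrC)
  refine ⟨L.toDiffeomorph.trans Ψ, L.symm x, r, hr, lt_of_le_of_lt ?_ (half_lt_self hε)⟩
  rwa [Diffeomorph.coe_trans, image_comp]

end Approximation

theorem stmt_0_general {E : Type*} [NormedAddCommGroup E] [NormedSpace ℝ E]
    (hE : Module.finrank ℝ E = 2) (C : Set E) (hCb : Bornology.IsBounded C)
    (hC : IsConnected C) :
    ∀ ε > (0 : ℝ), ∃ O : Set E,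
      IsOpen O ∧ Bornology.IsBounded O ∧ O.Nonempty ∧ SimplyConnectedSpace O ∧
      (∃ γ : ℝ → E,
        ContDiff ℝ (⊤ : ℕ∞) γ ∧ Function.Periodic γ 1 ∧
        (∀ s ∈ Set.Ico (0 : ℝ) 1, ∀ t ∈ Set.Ico (0 : ℝ) 1, γ s = γ t → s = t) ∧
        (∀ t, deriv γ t ≠ 0) ∧ frontier O = Set.range γ) ∧
      hausdorffDist C (closure O) < ε := by
  intro ε hε
  obtain ⟨Φ, c, r, hr, hdist⟩ := exists_diffeomorph_complex_hausdorffDist_image_lt hE hCb hC hε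
  obtain ⟨γ, hγ, hfrontier⟩ := exists_isSmoothJordanParam_frontier_image_ball Φ c hr
  have hclosure : closure (Φ '' ball c r) = Φ '' closedBall c r := by
    rw [← closure_ball c hr.ne', ← Φ.coe_toHomeomorph, Φ.toHomeomorph.image_closure]
  refine ⟨Φ '' ball c r, Φ.toHomeomorph.isOpenMap _ isOpen_ball, ?_,
    (nonempty_ball.2 hr).image Φ, simplyConnectedSpace_image_ball Φ.toHomeomorph c hr,
    ⟨γ, hγ.contDiff, hγ.periodic, fun s hs t ht ↦ hγ.injOn hs ht, hγ.deriv_ne_zero, hfrontier⟩,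
    hclosure ▸ hdist⟩
  exact ((isCompact_closedBall c r).image Φ.continuous).isBounded.subset
    (Set.image_mono ball_subset_closedBall)

/-- Any nonempty connected compact subset `C` of the plane can be approximated arbitrarily
well in Hausdorff distance by the closure of a bounded simply connected open set whose
boundary is a smooth (`C^∞`, regular, injective) Jordan curve. -/
theorem stmt_0 (C : Set (EuclideanSpace ℝ (Fin 2)))
    (hCcpt : IsCompact C) (hCconn : IsConnected C) (hCne : C.Nonempty) :
    ∀ ε > (0 : ℝ), ∃ O : Set (EuclideanSpace ℝ (Fin 2)),
      IsOpen O ∧ Bornology.IsBounded O ∧ O.Nonempty ∧ SimplyConnectedSpace O ∧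
      (∃ γ : ℝ → EuclideanSpace ℝ (Fin 2),
        ContDiff ℝ (⊤ : ℕ∞) γ ∧ Function.Periodic γ 1 ∧
        (∀ s ∈ Set.Ico (0:ℝ) 1, ∀ t ∈ Set.Ico (0:ℝ) 1, γ s = γ t → s = t) ∧
        (∀ t, deriv γ t ≠ 0) ∧ frontier O = Set.range γ) ∧
      hausdorffDist C (closure O) < ε :=
  stmt_0_general finrank_euclideanSpace_fin C hCcpt.isBounded hCconn
end

section
/- Harmonic functions with locally square-integrable gradient in an exterior planar domain are bounded with decaying gradient: if ψ is harmonic on {|x| > R} ⊂ ℝ² and ∇ψ ∈ L²({|x| > R}), then there exists a constant c such that ψ(x) = c + O(1/|x|) and |∇ψ(x)| = O(1/|x|²) as |x| → ∞. -/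
open MeasureTheory Filter

/-!
Identify the plane with `ℂ`. Where `ψ` is harmonic, `g = ∂ψ/∂x - i ∂ψ/∂y` is holomorphic, with
`|g| = |∇ψ|`. The mean value property of `g²` over the disc of radius `|z| / 2` around `z` bounds
`|z|² |g z|²` by a multiple of the integral of `|∇ψ|²` over that disc, which tends to `0`, so that
`g = o(1 / z)`.

The inversion `w = 1 / z` preserves harmonicity and turns this bound into `o(1 / w)` for the complex
derivative of `ψ (1 / w)` at the puncture `w = 0`. The singularity of that derivative is therefore
removable, and a primitive `F` of its extension satisfies `ψ z = Re F (1 / z)` after adding a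
constant. Hence `ψ = Re F 0 + O(1 / z)` and `|∇ψ z| = |F' (1 / z)| / |z|² = O(1 / |z|²)`.
-/

open Asymptotics Bornology Complex InnerProductSpace Metric Module Set Topology
open scoped ENNReal Laplacian Real

section AreaMeanValue

theorem setLIntegral_ball_eq_lintegral_circleMap {G : ℂ → ℝ≥0∞} {z : ℂ} {r : ℝ}
    (hG : Measurable ((ball z r).indicator G)) :
    ∫⁻ w in ball z r, G w =
      ∫⁻ ρ in Ioo 0 r, .ofReal ρ * ∫⁻ θ in Ioo (-π) π, G (circleMap z ρ θ) := by
  have circleMap_eq (ρ θ : ℝ) : z + Complex.polarCoord.symm (ρ, θ) = circleMap z ρ θ := by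
    rw [Complex.polarCoord_symm_apply, circleMap, Complex.exp_mul_I]; simp
  have hmeas : Measurable fun p : ℝ × ℝ ↦
      ENNReal.ofReal p.1 * (ball z r).indicator G (circleMap z p.1 p.2) := by
    have : Measurable fun p : ℝ × ℝ ↦ circleMap z p.1 p.2 := by
      unfold circleMap; fun_prop
    have := hG.comp this
    fun_prop
  have hind {ρ : ℝ} (hρ : 0 < ρ) (θ : ℝ) :
      (ball z r).indicator G (circleMap z ρ θ) =
        (Iio r).indicator (fun _ ↦ G (circleMap z ρ θ)) ρ := by
    simp [indicator, dist_eq_norm, abs_of_pos hρ]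
  calc ∫⁻ w in ball z r, G w
      = ∫⁻ p in polarCoord.target,
          .ofReal p.1 * (ball z r).indicator G (circleMap z p.1 p.2) := by
        rw [← lintegral_indicator measurableSet_ball, ← lintegral_add_left_eq_self _ z,
          ← Complex.lintegral_comp_polarCoord_symm]
        simp only [← circleMap_eq, smul_eq_mul]
    _ = ∫⁻ ρ in Ioi 0, ∫⁻ θ in Ioo (-π) π,
          .ofReal ρ * (ball z r).indicator G (circleMap z ρ θ) := by
        rw [polarCoord_target, Measure.volume_eq_prod, ← Measure.prod_restrict,
          lintegral_prod _ hmeas.aemeasurable]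
    _ = ∫⁻ ρ in Ioi 0, (Iio r).indicator
          (fun ρ ↦ .ofReal ρ * ∫⁻ θ in Ioo (-π) π, G (circleMap z ρ θ)) ρ := by
        refine setLIntegral_congr_fun measurableSet_Ioi fun ρ hρ ↦ ?_
        simp only [hind hρ]
        rw [lintegral_const_mul' _ _ ENNReal.ofReal_ne_top]
        by_cases h : ρ < r <;> simp [indicator, h]
    _ = _ := by
        rw [setLIntegral_indicator measurableSet_Iio, inter_comm, Ioi_inter_Iio]

variable {E : Type*} [NormedAddCommGroup E] [NormedSpace ℂ E] [CompleteSpace E]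

theorem two_pi_mul_enorm_le_lintegral_circleMap {f : ℂ → E} {z : ℂ} {ρ : ℝ}
    (hf : DiffContOnCl ℂ f (ball z |ρ|)) :
    .ofReal (2 * π) * ‖f z‖ₑ ≤ ∫⁻ θ in Ioo (-π) π, ‖f (circleMap z ρ θ)‖ₑ := by
  have hmean : ∫ θ in Ioo (-π) π, f (circleMap z ρ θ) = (2 * π) • f z := by
    have h := hf.circleAverage
    rw [Real.circleAverage_eq_integral_add (-π),
      intervalIntegral.integral_comp_add_right (fun θ ↦ f (circleMap z ρ θ)),
      inv_smul_eq_iff₀ (by positivity)] at h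
    rw [← h, ← integral_Ioc_eq_integral_Ioo,
      ← intervalIntegral.integral_of_le (by linarith [Real.pi_pos])]
    congr 1 <;> ring
  calc .ofReal (2 * π) * ‖f z‖ₑ = ‖∫ θ in Ioo (-π) π, f (circleMap z ρ θ)‖ₑ := by
        rw [hmean, enorm_smul, Real.enorm_of_nonneg (by positivity)]
    _ ≤ _ := enorm_integral_le_lintegral_enorm _

theorem pi_mul_sq_mul_enorm_le_setLIntegral_ball {f : ℂ → E} {z : ℂ} {r : ℝ} (hr : 0 ≤ r)
    (hf : DifferentiableOn ℂ f (ball z r)) :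
    .ofReal (π * r ^ 2) * ‖f z‖ₑ ≤ ∫⁻ w in ball z r, ‖f w‖ₑ := by
  have hmeas : Measurable ((ball z r).indicator (‖f ·‖ₑ)) := by
    classical
    rw [← piecewise_eq_indicator]
    exact hf.continuousOn.enorm.measurable_piecewise continuousOn_const measurableSet_ball
  have hradial : ∫⁻ ρ in Ioo 0 r, ENNReal.ofReal ρ = .ofReal (r ^ 2 / 2) := by
    have hint : IntegrableOn (fun ρ : ℝ ↦ ρ) (Ioo 0 r) :=
      continuous_id.integrableOn_Icc.mono_set Ioo_subset_Icc_self
    rw [← ofReal_integral_eq_lintegral_ofReal hint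
      (ae_restrict_of_forall_mem measurableSet_Ioo fun ρ hρ ↦ hρ.1.le),
      ← integral_Ioc_eq_integral_Ioo, ← intervalIntegral.integral_of_le hr]
    simp
  calc .ofReal (π * r ^ 2) * ‖f z‖ₑ
      = ∫⁻ ρ in Ioo 0 r, .ofReal ρ * (.ofReal (2 * π) * ‖f z‖ₑ) := by
        rw [lintegral_mul_const' _ _ (by finiteness), hradial, ← mul_assoc,
          ← ENNReal.ofReal_mul (by positivity)]
        ring_nf
    _ ≤ ∫⁻ ρ in Ioo 0 r, .ofReal ρ * ∫⁻ θ in Ioo (-π) π, ‖f (circleMap z ρ θ)‖ₑ := by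
        refine setLIntegral_mono' measurableSet_Ioo fun ρ hρ ↦ ?_
        gcongr
        refine two_pi_mul_enorm_le_lintegral_circleMap (hf.diffContOnCl_ball ?_)
        rw [abs_of_pos hρ.1]
        exact closedBall_subset_ball hρ.2
    _ = ∫⁻ w in ball z r, ‖f w‖ₑ := (setLIntegral_ball_eq_lintegral_circleMap hmeas).symm

end AreaMeanValue

section Tail

variable {E F : Type*} [SeminormedAddCommGroup E] [MeasurableSpace E] [OpensMeasurableSpace E]
  [SeminormedAddCommGroup F] {μ : Measure E} {f : E → F}

theorem tendsto_setLIntegral_enorm_smallSets_cobounded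
    (hf : IntegrableAtFilter f (cobounded E) μ) :
    Tendsto (fun s ↦ ∫⁻ x in s, ‖f x‖ₑ ∂μ) (cobounded E).smallSets (𝓝 0) := by
  obtain ⟨s, hs, hfs⟩ := hf
  set ν := (μ.restrict s).withDensity (‖f ·‖ₑ) with hν
  have hν_univ : ν univ ≠ ∞ := by
    simpa [hν] using hfs.hasFiniteIntegral.ne
  have hν_apply (r : ℝ) : ν (closedBall 0 r)ᶜ = ∫⁻ x in (closedBall 0 r)ᶜ ∩ s, ‖f x‖ₑ ∂μ := by
    rw [hν, withDensity_apply _ measurableSet_closedBall.compl,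
      Measure.restrict_restrict measurableSet_closedBall.compl]
  have hν_tendsto : Tendsto (fun r : ℝ ↦ ν (closedBall 0 r)ᶜ) atTop (𝓝 0) := by
    have hInter : ⋂ r : ℝ, (closedBall (0 : E) r)ᶜ = ∅ := by
      rw [← compl_iUnion, compl_empty_iff, iUnion_eq_univ_iff]
      exact fun x ↦ ⟨‖x‖, by simp⟩
    simpa only [Function.comp_def, hInter, measure_empty] using tendsto_measure_iInter_atTop
      (fun r : ℝ ↦ (measurableSet_closedBall (x := (0 : E))).compl.nullMeasurableSet (μ := ν))
      (fun _ _ h ↦ compl_subset_compl.2 (closedBall_subset_closedBall h))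
      ⟨0, measure_ne_top_of_subset (subset_univ _) hν_univ⟩
  rw [ENNReal.tendsto_nhds_zero]
  intro ε hε
  obtain ⟨r, hr⟩ := (hν_tendsto.eventually_le_const hε).exists
  rw [eventually_smallSets]
  refine ⟨(closedBall 0 r)ᶜ ∩ s, inter_mem (isCobounded_def.1 isBounded_closedBall.compl) hs,
    fun t ht ↦ ?_⟩
  calc ∫⁻ x in t, ‖f x‖ₑ ∂μ ≤ ν (closedBall 0 r)ᶜ := hν_apply r ▸ lintegral_mono_set ht
    _ ≤ ε := hr

end Tail

theorem tendsto_ball_half_norm_smallSets_cobounded {E : Type*} [SeminormedAddCommGroup E] :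
    Tendsto (fun x : E ↦ ball x (‖x‖ / 2)) (cobounded E) (cobounded E).smallSets := by
  rw [tendsto_smallSets_iff]
  intro s hs
  obtain ⟨r, -, hr⟩ := hasBasis_cobounded_norm.mem_iff.1 hs
  filter_upwards [tendsto_norm_cobounded_atTop.eventually_ge_atTop (2 * r)] with x hx
  refine Subset.trans (fun y hy ↦ ?_) hr
  have hxy : ‖x‖ - ‖y‖ < ‖x‖ / 2 :=
    (norm_sub_norm_le x y).trans_lt (by rwa [← dist_eq_norm', ← mem_ball])
  simp only [mem_ofPred_eq]
  linarith

section Decay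

variable {E : Type*} [NormedAddCommGroup E] [NormedSpace ℂ E] [CompleteSpace E]

theorem isLittleO_sq_inv_cobounded_of_integrableAtFilter {f : ℂ → E}
    (hf : ∀ᶠ z in cobounded ℂ, DifferentiableAt ℂ f z)
    (hi : IntegrableAtFilter (‖f ·‖) (cobounded ℂ)) :
    f =o[cobounded ℂ] fun z ↦ (z⁻¹) ^ 2 := by
  have hball : Tendsto (fun z : ℂ ↦ ∫⁻ w in ball z (‖z‖ / 2), ‖f w‖ₑ) (cobounded ℂ) (𝓝 0) := by
    simpa only [Function.comp_def, enorm_norm] using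
      (tendsto_setLIntegral_enorm_smallSets_cobounded hi).comp
        tendsto_ball_half_norm_smallSets_cobounded
  rw [isLittleO_iff]
  intro ε hε
  filter_upwards [tendsto_ball_half_norm_smallSets_cobounded.eventually
      (eventually_smallSets.2 ⟨_, hf, fun _ ↦ id⟩),
    hball.eventually_le_const (ENNReal.ofReal_pos.2 (show 0 < π / 4 * ε by positivity)),
    eventually_ne_cobounded 0] with z hz hz_le hz0
  have hdiff : DifferentiableOn ℂ f (ball z (‖z‖ / 2)) :=
    fun w hw ↦ (hz hw).differentiableWithinAt
  have harea := (pi_mul_sq_mul_enorm_le_setLIntegral_ball (by positivity) hdiff).trans hz_le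
  rw [← ofReal_norm, ← ENNReal.ofReal_mul (by positivity),
    ENNReal.ofReal_le_ofReal_iff (by positivity)] at harea
  rw [norm_pow, norm_inv, inv_pow, ← div_eq_mul_inv, le_div_iff₀ (by positivity)]
  nlinarith [Real.pi_pos]

theorem isLittleO_inv_cobounded_of_integrableAtFilter_sq {f : ℂ → ℂ}
    (hf : ∀ᶠ z in cobounded ℂ, DifferentiableAt ℂ f z)
    (hi : IntegrableAtFilter (fun z ↦ ‖f z‖ ^ 2) (cobounded ℂ)) :
    f =o[cobounded ℂ] fun z ↦ z⁻¹ := by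
  refine .of_pow (n := 2) (isLittleO_sq_inv_cobounded_of_integrableAtFilter
    (hf.mono fun z hz ↦ hz.pow 2) ?_) two_ne_zero
  simpa only [Pi.pow_apply, norm_pow] using hi

end Decay

section ComplexPartial

/-- The complex derivative `∂u/∂x - i ∂u/∂y = 2 ∂u/∂z` of a real-valued function on the plane. It
has the length of the gradient of `u`, and is holomorphic where `u` is harmonic. -/
noncomputable def complexPartial (u : ℂ → ℝ) (z : ℂ) : ℂ :=
  fderiv ℝ u z 1 - I * fderiv ℝ u z I

variable {u v : ℂ → ℝ} {z : ℂ}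

theorem fderiv_apply_eq_re_complexPartial_mul (u : ℂ → ℝ) (z h : ℂ) :
    fderiv ℝ u z h = (complexPartial u z * h).re := by
  have hh : h = h.re • (1 : ℂ) + h.im • I := by simp
  conv_lhs => rw [hh, map_add, map_smul, map_smul]
  simp [complexPartial, mul_comm]

theorem complexPartial_eq_of_hasFDerivAt {c : ℂ} {L : ℂ →L[ℝ] ℝ} (hu : HasFDerivAt u L z)
    (hL : ∀ h, L h = (c * h).re) : complexPartial u z = c := by
  apply Complex.ext <;> simp [complexPartial, hu.fderiv, hL]

theorem fderiv_eq_of_complexPartial_eq (h : complexPartial u z = complexPartial v z) :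
    fderiv ℝ u z = fderiv ℝ v z := by
  ext1 w
  simp only [fderiv_apply_eq_re_complexPartial_mul, h]

theorem norm_complexPartial (u : ℂ → ℝ) (z : ℂ) : ‖complexPartial u z‖ = ‖fderiv ℝ u z‖ := by
  refine le_antisymm ?_ (ContinuousLinearMap.opNorm_le_bound _ (norm_nonneg _) fun h ↦ ?_)
  · have hconj : ‖complexPartial u z‖ * ‖complexPartial u z‖ ≤
        ‖fderiv ℝ u z‖ * ‖complexPartial u z‖ := by
      have h := (fderiv ℝ u z).le_opNorm (starRingEnd ℂ (complexPartial u z))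
      rwa [fderiv_apply_eq_re_complexPartial_mul, Complex.mul_conj, Complex.norm_conj,
        ofReal_re, Complex.normSq_eq_norm_sq, Real.norm_of_nonneg (by positivity), sq] at h
    nlinarith [norm_nonneg (complexPartial u z), norm_nonneg (fderiv ℝ u z)]
  · rw [fderiv_apply_eq_re_complexPartial_mul, ← norm_mul]
    exact abs_re_le_norm _

theorem complexPartial_comp {φ : ℂ → ℂ} {φ' : ℂ} (hu : DifferentiableAt ℝ u (φ z))
    (hφ : HasDerivAt φ φ' z) : complexPartial (u ∘ φ) z = complexPartial u (φ z) * φ' :=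
  complexPartial_eq_of_hasFDerivAt (hu.hasFDerivAt.comp z (hφ.hasFDerivAt.restrictScalars ℝ))
    fun h ↦ by simp [fderiv_apply_eq_re_complexPartial_mul, mul_assoc, mul_comm φ']

theorem complexPartial_re {F : ℂ → ℂ} {F' : ℂ} (hF : HasDerivAt F F' z) :
    complexPartial (fun w ↦ (F w).re) z = F' :=
  complexPartial_eq_of_hasFDerivAt (reCLM.hasFDerivAt.comp z (hF.hasFDerivAt.restrictScalars ℝ))
    fun h ↦ by simp [mul_comm]

theorem complexPartial_congr_nhds (h : u =ᶠ[𝓝 z] v) :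
    complexPartial u z = complexPartial v z := by
  simp only [complexPartial, h.fderiv_eq]

theorem harmonicAt_comp_analyticAt {φ : ℂ → ℂ} (hu : HarmonicAt u (φ z))
    (hφ : AnalyticAt ℂ φ z) : HarmonicAt (u ∘ φ) z := by
  obtain ⟨r, hr, hball⟩ := Metric.isOpen_iff.1 (isOpen_setOfPred_harmonicAt u) _ hu
  obtain ⟨F, hF, hFu⟩ := HarmonicOnNhd.exists_analyticOnNhd_ball_re_eq hball
  have hcomp : AnalyticAt ℂ (F ∘ φ) z := (hF _ (mem_ball_self hr)).comp hφ
  refine (harmonicAt_congr_nhds ?_).1 hcomp.harmonicAt_re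
  filter_upwards [hφ.continuousAt (ball_mem_nhds _ hr)] with w hw using hFu hw

end ComplexPartial

section Puncture

theorem isPreconnected_ball_sdiff_singleton {E : Type*} [NormedAddCommGroup E] [NormedSpace ℝ E]
    (hE : 1 < Module.rank ℝ E) (c : E) (r : ℝ) : IsPreconnected (ball c r \ {c}) := by
  have himage : ball c r \ {c} =
      (fun p : ℝ × E ↦ c + p.1 • p.2) '' (Ioo 0 r ×ˢ sphere (0 : E) 1) := by
    ext x
    constructor
    · rintro ⟨hxr, hxc⟩
      have hpos : 0 < ‖x - c‖ := norm_sub_pos_iff.2 hxc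
      refine ⟨(‖x - c‖, ‖x - c‖⁻¹ • (x - c)), ⟨⟨hpos, by rwa [← dist_eq_norm]⟩, ?_⟩, ?_⟩
      · simp [norm_smul, hpos.ne']
      · simp [smul_smul, hpos.ne']
    · rintro ⟨⟨t, y⟩, ⟨⟨ht0, htr⟩, hy⟩, rfl⟩
      have hy1 : ‖y‖ = 1 := by simpa using hy
      refine ⟨by simpa [norm_smul, hy1, abs_of_pos ht0] using htr, ?_⟩
      simp [ht0.ne', norm_ne_zero_iff.1 (hy1 ▸ one_ne_zero)]
  rw [himage]
  exact (isPreconnected_Ioo.prod (isPreconnected_sphere hE 0 1)).image _ (by fun_prop)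

theorem exists_hasDerivAt_of_isLittleO_sub_inv {E : Type*} [NormedAddCommGroup E] [NormedSpace ℂ E]
    [CompleteSpace E] {f : ℂ → E} {c : ℂ} {r : ℝ} (hr : 0 < r)
    (hd : DifferentiableOn ℂ f (ball c r \ {c})) (ho : f =o[𝓝[≠] c] fun z ↦ (z - c)⁻¹) :
    ∃ F : ℂ → E, DifferentiableOn ℂ F (ball c r) ∧ ∀ z ∈ ball c r \ {c}, HasDerivAt F (f z) z := by
  have hconst : (fun _ ↦ f c) =o[𝓝[≠] c] fun z ↦ (z - c)⁻¹ :=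
    isBoundedUnder_const.isLittleO_sub_self_inv
  obtain ⟨F, hF⟩ := (differentiableOn_update_limUnder_of_isLittleO (ball_mem_nhds c hr) hd
    (ho.sub hconst)).isExactOn_ball
  refine ⟨F, fun z hz ↦ (hF z hz).differentiableAt.differentiableWithinAt, fun z hz ↦ ?_⟩
  simpa only [Function.update_of_ne hz.2] using hF z hz.1

theorem exists_analyticAt_eventuallyEq_re {u : ℂ → ℝ} {c : ℂ}
    (hu : ∀ᶠ z in 𝓝[≠] c, HarmonicAt u z) (ho : complexPartial u =o[𝓝[≠] c] fun z ↦ (z - c)⁻¹) :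
    ∃ F : ℂ → ℂ, AnalyticAt ℂ F c ∧ u =ᶠ[𝓝[≠] c] fun z ↦ (F z).re := by
  obtain ⟨r, hr, hball⟩ := (nhdsWithin_hasBasis nhds_basis_ball _).mem_iff.1 hu
  change ball c r \ {c} ⊆ _ at hball
  have hpartial : DifferentiableOn ℂ (complexPartial u) (ball c r \ {c}) :=
    fun z hz ↦ (HarmonicAt.differentiableAt_complex_partial (hball hz)).differentiableWithinAt
  obtain ⟨F, hF, hF'⟩ := exists_hasDerivAt_of_isLittleO_sub_inv hr hpartial ho
  have hF_re (z) (hz : z ∈ ball c r \ {c}) : DifferentiableAt ℝ (fun z ↦ (F z).re) z :=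
    reCLM.differentiableAt.comp z ((hF' z hz).differentiableAt.restrictScalars ℝ)
  obtain ⟨a, ha⟩ := (isOpen_ball.sdiff isClosed_singleton).exists_eq_add_of_fderiv_eq
    (isPreconnected_ball_sdiff_singleton (by simp) c r)
    (fun z hz ↦ ((hball hz).1.differentiableAt two_ne_zero).differentiableWithinAt)
    (fun z hz ↦ (hF_re z hz).differentiableWithinAt)
    (fun z hz ↦ fderiv_eq_of_complexPartial_eq (complexPartial_re (hF' z hz)).symm)
  refine ⟨fun z ↦ F z + a, (hF.analyticAt (ball_mem_nhds c hr)).add analyticAt_const, ?_⟩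
  filter_upwards [inter_mem_nhdsWithin {c}ᶜ (ball_mem_nhds c hr)] with z hz
  simpa using ha ⟨hz.2, hz.1⟩

end Puncture

section Infinity

theorem eventually_eventually_nhds_cobounded {E : Type*} [SeminormedAddCommGroup E] {p : E → Prop}
    (hp : ∀ᶠ x in cobounded E, p x) : ∀ᶠ x in cobounded E, ∀ᶠ y in 𝓝 x, p y := by
  obtain ⟨r, -, hr⟩ := hasBasis_cobounded_norm.eventually_iff.1 hp
  filter_upwards [tendsto_norm_cobounded_atTop.eventually_gt_atTop r] with x hx
  exact (continuous_norm.tendsto x |>.eventually_const_lt hx).mono fun y hy ↦ hr hy.le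

variable {u : ℂ → ℝ}

theorem exists_analyticAt_zero_eventuallyEq_re_inv
    (hu : ∀ᶠ z in cobounded ℂ, HarmonicAt u z)
    (ho : complexPartial u =o[cobounded ℂ] fun z ↦ z⁻¹) :
    ∃ F : ℂ → ℂ, AnalyticAt ℂ F 0 ∧ u =ᶠ[cobounded ℂ] fun z ↦ (F z⁻¹).re := by
  have hinv : ∀ᶠ w in 𝓝[≠] (0 : ℂ), HarmonicAt u w⁻¹ := tendsto_inv₀_nhdsNE_zero.eventually hu
  have hharm : ∀ᶠ w in 𝓝[≠] (0 : ℂ), HarmonicAt (u ∘ Inv.inv) w := by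
    filter_upwards [hinv, self_mem_nhdsWithin] with w hw hw0
      using harmonicAt_comp_analyticAt hw (analyticAt_inv hw0)
  have hpartial : complexPartial (u ∘ Inv.inv) =ᶠ[𝓝[≠] 0]
      fun w ↦ complexPartial u w⁻¹ * -(w ^ 2)⁻¹ := by
    filter_upwards [hinv, self_mem_nhdsWithin] with w hw hw0
      using complexPartial_comp (hw.1.differentiableAt two_ne_zero) (hasDerivAt_inv hw0)
  have hlittle : complexPartial (u ∘ Inv.inv) =o[𝓝[≠] 0] fun w : ℂ ↦ (w - 0)⁻¹ := by
    refine ((ho.comp_tendsto tendsto_inv₀_nhdsNE_zero).mul_isBigO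
      (isBigO_refl (fun w : ℂ ↦ -(w ^ 2)⁻¹) _).neg_right).congr' hpartial.symm ?_
    filter_upwards [self_mem_nhdsWithin] with w hw
    have hw0 : w ≠ 0 := hw
    simp only [Function.comp_apply, inv_inv, neg_neg, sub_zero]
    field_simp
  obtain ⟨F, hF, hFu⟩ := exists_analyticAt_eventuallyEq_re hharm hlittle
  refine ⟨F, hF, ?_⟩
  filter_upwards [tendsto_inv₀_cobounded'.eventually hFu] with z hz
  simpa using hz

theorem isBigO_sub_inv_cobounded_of_analyticAt {F : ℂ → ℂ} (hF : AnalyticAt ℂ F 0)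
    (hu : u =ᶠ[cobounded ℂ] fun z ↦ (F z⁻¹).re) :
    (fun z ↦ u z - (F 0).re) =O[cobounded ℂ] fun z ↦ z⁻¹ := by
  have hF_sub : (fun z : ℂ ↦ F z⁻¹ - F 0) =O[cobounded ℂ] fun z ↦ z⁻¹ := by
    simpa only [Function.comp_def, sub_zero] using
      hF.differentiableAt.isBigO_sub.comp_tendsto tendsto_inv₀_cobounded
  refine .trans (.of_bound' ?_) hF_sub
  filter_upwards [hu] with z hz
  rw [hz, ← sub_re]
  exact abs_re_le_norm _

theorem isBigO_complexPartial_cobounded_of_analyticAt {F : ℂ → ℂ} (hF : AnalyticAt ℂ F 0)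
    (hu : u =ᶠ[cobounded ℂ] fun z ↦ (F z⁻¹).re) :
    complexPartial u =O[cobounded ℂ] fun z ↦ (z ^ 2)⁻¹ := by
  have hpartial : complexPartial u =ᶠ[cobounded ℂ] fun z ↦ deriv F z⁻¹ * -(z ^ 2)⁻¹ := by
    filter_upwards [eventually_eventually_nhds_cobounded hu, eventually_ne_cobounded 0,
      tendsto_inv₀_cobounded.eventually hF.eventually_analyticAt] with z hz hz0 hFz
    rw [complexPartial_congr_nhds hz]
    exact complexPartial_re (hFz.differentiableAt.hasDerivAt.comp z (hasDerivAt_inv hz0))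
  have hderiv : (fun z : ℂ ↦ deriv F z⁻¹) =O[cobounded ℂ] fun _ ↦ (1 : ℂ) :=
    (hF.deriv.continuousAt.tendsto.comp tendsto_inv₀_cobounded).isBigO_one ℂ
  simpa only [one_mul] using
    hpartial.trans_isBigO (hderiv.mul (isBigO_refl (fun z : ℂ ↦ (z ^ 2)⁻¹) _).neg_left)

theorem exists_isBigO_cobounded_of_harmonicAt_complex (hu : ∀ᶠ z in cobounded ℂ, HarmonicAt u z)
    (hi : IntegrableAtFilter (fun z ↦ ‖fderiv ℝ u z‖ ^ 2) (cobounded ℂ)) :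
    ∃ c, (fun z ↦ u z - c) =O[cobounded ℂ] (fun z ↦ ‖z‖⁻¹) ∧
      fderiv ℝ u =O[cobounded ℂ] fun z ↦ (‖z‖ ^ 2)⁻¹ := by
  simp only [← norm_complexPartial] at hi
  obtain ⟨F, hF, huF⟩ := exists_analyticAt_zero_eventuallyEq_re_inv hu <|
    isLittleO_inv_cobounded_of_integrableAtFilter_sq
      (hu.mono fun _ ↦ HarmonicAt.differentiableAt_complex_partial) hi
  refine ⟨(F 0).re, ?_, .trans (isBigO_of_le _ fun z ↦ (norm_complexPartial u z).ge) ?_⟩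
  · simpa only [norm_inv] using (isBigO_sub_inv_cobounded_of_analyticAt hF huF).norm_right
  · simpa only [norm_inv, norm_pow] using
      (isBigO_complexPartial_cobounded_of_analyticAt hF huF).norm_right

end Infinity

section Isometry

theorem norm_fderiv_comp_linearIsometryEquiv {E E' F : Type*} [NormedAddCommGroup E]
    [NormedSpace ℝ E] [NormedAddCommGroup E'] [NormedSpace ℝ E'] [NormedAddCommGroup F]
    [NormedSpace ℝ F] (e : E ≃ₗᵢ[ℝ] E') (f : E' → F) (x : E) :
    ‖fderiv ℝ (f ∘ e) x‖ = ‖fderiv ℝ f (e x)‖ := by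
  rw [← e.coe_toContinuousLinearEquiv, e.toContinuousLinearEquiv.comp_right_fderiv]
  exact ContinuousLinearMap.opNorm_comp_linearIsometryEquiv _ e

variable {E E' F : Type*} [NormedAddCommGroup E] [InnerProductSpace ℝ E] [FiniteDimensional ℝ E]
  [NormedAddCommGroup E'] [InnerProductSpace ℝ E'] [FiniteDimensional ℝ E']
  [NormedAddCommGroup F] [NormedSpace ℝ F]

theorem laplacian_comp_linearIsometryEquiv (e : E ≃ₗᵢ[ℝ] E') (f : E' → F) :
    Δ (f ∘ e) = Δ f ∘ e := by
  ext x
  have hcomp : iteratedFDeriv ℝ 2 (f ∘ e) x =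
      (iteratedFDeriv ℝ 2 f (e x)).compContinuousLinearMap
        fun _ ↦ e.toContinuousLinearEquiv := by
    simpa only [preimage_univ, iteratedFDerivWithin_univ,
      LinearIsometryEquiv.coe_toContinuousLinearEquiv] using
      e.toContinuousLinearEquiv.iteratedFDerivWithin_comp_right f uniqueDiffOn_univ
        (mem_univ (e x)) 2
  rw [Function.comp_apply, laplacian_eq_iteratedFDeriv_orthonormalBasis f
      ((stdOrthonormalBasis ℝ E).map e),
    laplacian_eq_iteratedFDeriv_orthonormalBasis _ (stdOrthonormalBasis ℝ E)]
  refine Finset.sum_congr rfl fun i _ ↦ ?_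
  rw [hcomp]
  simp [iteratedFDeriv_two_apply]

theorem harmonicAt_comp_linearIsometryEquiv (e : E ≃ₗᵢ[ℝ] E') {f : E' → F} {x : E}
    (hf : HarmonicAt f (e x)) : HarmonicAt (f ∘ e) x := by
  refine ⟨hf.1.comp x e.contDiff.contDiffAt, ?_⟩
  rw [laplacian_comp_linearIsometryEquiv]
  exact e.continuous.continuousAt.eventually hf.2

theorem laplacian_eq_sum_fderiv_fderiv {ι : Type*} [Fintype ι] (b : OrthonormalBasis ι ℝ E)
    {f : E → F} {x : E} (hf : DifferentiableAt ℝ (fderiv ℝ f) x) :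
    Δ f x = ∑ i, fderiv ℝ (fun y ↦ fderiv ℝ f y (b i)) x (b i) := by
  rw [laplacian_eq_iteratedFDeriv_orthonormalBasis f b]
  refine Finset.sum_congr rfl fun i _ ↦ ?_
  rw [fderiv_clm_apply hf (differentiableAt_const _)]
  simp [iteratedFDeriv_two_apply]

theorem harmonicOnNhd_of_sum_fderiv_fderiv_eq_zero {ι : Type*} [Fintype ι]
    (b : OrthonormalBasis ι ℝ E) {f : E → F} {s : Set E} (hs : IsOpen s) (hf : ContDiffOn ℝ 2 f s)
    (h : ∀ x ∈ s, ∑ i, fderiv ℝ (fun y ↦ fderiv ℝ f y (b i)) x (b i) = 0) :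
    HarmonicOnNhd f s := by
  intro x hx
  refine ⟨hf.contDiffAt (hs.mem_nhds hx), ?_⟩
  filter_upwards [hs.mem_nhds hx] with y hy
  have hfderiv : ContDiffAt ℝ 1 (fderiv ℝ f) y :=
    (hf.contDiffAt (hs.mem_nhds hy)).fderiv_right (by norm_num)
  rw [laplacian_eq_sum_fderiv_fderiv b (hfderiv.differentiableAt one_ne_zero), h y hy,
    Pi.zero_apply]

end Isometry

section Plane

variable {E : Type*} [NormedAddCommGroup E] [InnerProductSpace ℝ E]

theorem nonempty_complex_linearIsometryEquiv (hE : finrank ℝ E = 2) : Nonempty (ℂ ≃ₗᵢ[ℝ] E) :=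
  have := FiniteDimensional.of_finrank_eq_succ hE
  ⟨Complex.orthonormalBasisOneI.equiv (stdOrthonormalBasis ℝ E) (finCongr hE.symm)⟩

theorem exists_isBigO_cobounded_of_harmonicAt [FiniteDimensional ℝ E] [MeasurableSpace E]
    [BorelSpace E] (hE : finrank ℝ E = 2) {u : E → ℝ} (hu : ∀ᶠ x in cobounded E, HarmonicAt u x)
    (hi : IntegrableAtFilter (fun x ↦ ‖fderiv ℝ u x‖ ^ 2) (cobounded E)) :
    ∃ c, (fun x ↦ u x - c) =O[cobounded E] (fun x ↦ ‖x‖⁻¹) ∧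
      fderiv ℝ u =O[cobounded E] fun x ↦ (‖x‖ ^ 2)⁻¹ := by
  obtain ⟨e⟩ := nonempty_complex_linearIsometryEquiv hE
  have hmap : map e (cobounded ℂ) = cobounded E :=
    DilationEquiv.map_cobounded e.toIsometryEquiv.toDilationEquiv
  have hemb : MeasurableEmbedding e := e.toHomeomorph.measurableEmbedding
  have hu' : ∀ᶠ z in cobounded ℂ, HarmonicAt (u ∘ e) z := by
    rw [← hmap, eventually_map] at hu
    exact hu.mono fun z ↦ harmonicAt_comp_linearIsometryEquiv e
  have hi' : IntegrableAtFilter (fun z ↦ ‖fderiv ℝ (u ∘ e) z‖ ^ 2) (cobounded ℂ) := by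
    simp only [norm_fderiv_comp_linearIsometryEquiv]
    rwa [← hmap, ← e.measurePreserving.map_eq, hemb.integrableAtFilter_map_iff] at hi
  obtain ⟨c, hc, hfderiv⟩ := exists_isBigO_cobounded_of_harmonicAt_complex hu' hi'
  refine ⟨c, ?_, ?_⟩
  · simpa [← hmap, isBigO_map, Function.comp_def] using hc
  · have hfderiv_norm := hfderiv.norm_left
    simp only [norm_fderiv_comp_linearIsometryEquiv] at hfderiv_norm
    simpa [← hmap, isBigO_map, Function.comp_def] using hfderiv_norm

end Plane

theorem norm_gradient {E : Type*} [NormedAddCommGroup E] [InnerProductSpace ℝ E] [CompleteSpace E]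
    (f : E → ℝ) (x : E) : ‖gradient f x‖ = ‖fderiv ℝ f x‖ := by
  simp [gradient]

theorem exists_forall_norm_le_div_of_isBigO_cobounded {E F G : Type*}
    [SeminormedAddCommGroup E] [SeminormedAddCommGroup F] [SeminormedAddCommGroup G]
    {f : E → F} {g : E → G}
    (hf : f =O[cobounded E] fun x ↦ ‖x‖⁻¹)
    (hg : g =O[cobounded E] fun x ↦ (‖x‖ ^ 2)⁻¹) (R : ℝ) :
    ∃ M R', R < R' ∧ ∀ x, R' ≤ ‖x‖ → ‖f x‖ ≤ M / ‖x‖ ∧ ‖g x‖ ≤ M / ‖x‖ ^ 2 := by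
  obtain ⟨A, hA⟩ := hf.bound
  obtain ⟨B, hB⟩ := hg.bound
  obtain ⟨r, -, hr⟩ := hasBasis_cobounded_norm.eventually_iff.1 (hA.and hB)
  refine ⟨max A B, max r (R + 1), by simp, fun x hx ↦ ?_⟩
  obtain ⟨hfx, hgx⟩ := hr ((le_max_left _ _).trans hx)
  simp only [norm_inv, norm_pow, norm_norm, ← div_eq_mul_inv] at hfx hgx
  exact ⟨hfx.trans (by gcongr; exact le_max_left _ _),
    hgx.trans (by gcongr; exact le_max_right _ _)⟩

theorem stmt_18_general {E : Type*} [NormedAddCommGroup E] [InnerProductSpace ℝ E]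
    [FiniteDimensional ℝ E] [MeasurableSpace E] [BorelSpace E] (hE : finrank ℝ E = 2) {R : ℝ}
    {ψ : E → ℝ} (hψ : HarmonicOnNhd ψ {x | R < ‖x‖})
    (hL2 : IntegrableOn (fun x ↦ ‖gradient ψ x‖ ^ 2) {x | R < ‖x‖}) :
    ∃ c M R' : ℝ, R < R' ∧
      ∀ x, R' ≤ ‖x‖ → |ψ x - c| ≤ M / ‖x‖ ∧ ‖gradient ψ x‖ ≤ M / ‖x‖ ^ 2 := by
  have hext : {x : E | R < ‖x‖} ∈ cobounded E :=
    tendsto_norm_cobounded_atTop.eventually_gt_atTop R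
  simp only [norm_gradient] at hL2 ⊢
  obtain ⟨c, hc, hfderiv⟩ := exists_isBigO_cobounded_of_harmonicAt hE
    (mem_of_superset hext hψ) ⟨_, hext, hL2⟩
  exact ⟨c, exists_forall_norm_le_div_of_isBigO_cobounded hc hfderiv R⟩

/-- A harmonic function on an exterior planar domain `{|x| > R}` with square-integrable
gradient is bounded, converging to some constant `c` with rate `O(1/|x|)`, and its
gradient decays like `O(1/|x|²)`. -/
theorem stmt_18 (R : ℝ) (hR : 0 < R) (ψ : EuclideanSpace ℝ (Fin 2) → ℝ)
    (hsm : ContDiffOn ℝ 2 ψ {x : EuclideanSpace ℝ (Fin 2) | R < ‖x‖})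
    (hharm : ∀ x ∈ {x : EuclideanSpace ℝ (Fin 2) | R < ‖x‖},
      (∑ i, fderiv ℝ (fun y => fderiv ℝ ψ y (EuclideanSpace.single i 1)) x
        (EuclideanSpace.single i 1)) = 0)
    (hL2 : IntegrableOn (fun x => ‖gradient ψ x‖ ^ 2)
      {x : EuclideanSpace ℝ (Fin 2) | R < ‖x‖} volume) :
    ∃ (c : ℝ) (M : ℝ) (R' : ℝ), R < R' ∧
      ∀ x : EuclideanSpace ℝ (Fin 2), R' ≤ ‖x‖ →
        |ψ x - c| ≤ M / ‖x‖ ∧ ‖gradient ψ x‖ ≤ M / ‖x‖ ^ 2 :=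
  stmt_18_general finrank_euclideanSpace_fin
    (harmonicOnNhd_of_sum_fderiv_fderiv_eq_zero (EuclideanSpace.basisFun (Fin 2) ℝ)
      (isOpen_lt continuous_const continuous_norm) hsm (by simpa using hharm)) hL2
end
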